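/- Let p₀ = (1 − log π / log 4)^{-1} and let p > p₀ be a real number. Then there exists a positive integer d such that 2^{1/p} · ∫_{𝕋^d} |z₁ + z₂ + ⋯ + z_d|/√d dm(z) < 1, where m is the normalized Haar measure on 𝕋^d. (This is the quantitative core of the main theorem: for the symbol φ = f = (z₁ + ⋯ + z_d)/√d one has ⟨f, φ⟩ = 1, ‖H_φ‖_{S_p} = 2^{1/p}, and ‖f‖₁ = ∫ |z₁ + ⋯ + z_d|/√d dm, so this inequality says |⟨f, φ⟩| > ‖H_φ‖_{S_p} ‖f‖₁.) -/

import Mathlib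

open MeasureTheory

noncomputable instance : MeasurableSpace Circle := borel Circle
instance : BorelSpace Circle := ⟨rfl⟩

/-- The normalized Lebesgue (arc-length) measure on the unit circle `{z : ℂ | |z| = 1}`,
a probability measure; it is the normalized Haar measure of the circle group. -/
noncomputable def circleHaar : Measure Circle :=
  (ENNReal.ofReal (2 * Real.pi))⁻¹ •
    (volume.restrict (Set.Ioc 0 (2 * Real.pi))).map Circle.exp

/-- The normalized Haar measure on the `d`-dimensional torus `𝕋^d`, i.e. the product of the
normalized Lebesgue (arc-length) measures on each circle factor. -/
noncomputable def torusHaar (d : ℕ) : Measure (Fin d → Circle) :=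
  Measure.pi fun _ => circleHaar

open ProbabilityTheory Filter Topology

lemma circleHaar_univ : circleHaar Set.univ = 1 := by
  unfold circleHaar
  have h : 0 < 2 * Real.pi := by positivity
  rw [Measure.smul_apply, Measure.map_apply Circle.exp.continuous.measurable MeasurableSet.univ]
  simp only [Set.preimage_univ, Measure.restrict_apply_univ, Real.volume_Ioc, sub_zero, smul_eq_mul]
  exact ENNReal.inv_mul_cancel (by simpa using h) ENNReal.ofReal_ne_top

instance : IsProbabilityMeasure circleHaar := ⟨circleHaar_univ⟩

lemma integral_circleHaar (f : Circle → ℝ) (hf : Continuous f) :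
    ∫ w, f w ∂circleHaar = (2 * Real.pi)⁻¹ * ∫ t in (0 : ℝ)..2 * Real.pi, f (Circle.exp t) := by
  unfold circleHaar
  rw [integral_smul_measure, integral_map Circle.exp.continuous.aemeasurable
    hf.aestronglyMeasurable, intervalIntegral.integral_of_le (by positivity)]
  rw [ENNReal.toReal_inv, ENNReal.toReal_ofReal (by positivity), smul_eq_mul]

lemma circleHaar_eq_map [Fact (0 < 2 * Real.pi)] :
    circleHaar = (ENNReal.ofReal (2 * Real.pi))⁻¹ •
      (volume : Measure (AddCircle (2 * Real.pi))).map AddCircle.toCircle := by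
  have h := AddCircle.measurePreserving_mk (2 * Real.pi) 0
  rw [zero_add] at h
  have hm : Measurable (AddCircle.toCircle (T := 2 * Real.pi)) :=
    AddCircle.continuous_toCircle.measurable
  rw [← h.map_eq, Measure.map_map hm h.measurable]
  unfold circleHaar
  congr 2
  ext t
  simp [AddCircle.toCircle_apply_mk]

lemma measurePreserving_mul_circle (u : Circle) :
    MeasurePreserving (fun w : Circle => u * w) circleHaar circleHaar := by
  have : Fact (0 < 2 * Real.pi) := ⟨by positivity⟩
  have hm : Measurable (AddCircle.toCircle (T := 2 * Real.pi)) :=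
    AddCircle.continuous_toCircle.measurable
  have hu : Measurable (fun w : Circle => u * w) := (continuous_const_mul u).measurable
  refine ⟨hu, ?_⟩
  obtain ⟨t, ht⟩ : ∃ t : ℝ, Circle.exp t = u := ⟨Complex.arg u, Circle.exp_arg u⟩
  let a : AddCircle (2 * Real.pi) := (t : AddCircle (2 * Real.pi))
  have ha : AddCircle.toCircle a = u := by
    simp [a, AddCircle.toCircle_apply_mk, ht]
  rw [circleHaar_eq_map, Measure.map_smul, Measure.map_map hu hm]
  congr 1
  have hc : (fun w : Circle => u * w) ∘ AddCircle.toCircle (T := 2 * Real.pi)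
      = AddCircle.toCircle ∘ (fun x => a + x) := by
    ext x
    simp [AddCircle.toCircle_add, ha]
  rw [hc, ← Measure.map_map hm (measurable_const_add a), map_add_left_eq_self]

lemma integrable_cont {X : Type*} [TopologicalSpace X] [CompactSpace X] [MeasurableSpace X]
    [OpensMeasurableSpace X] {μ : Measure X} [IsFiniteMeasure μ] {f : X → ℝ} (hf : Continuous f) :
    Integrable f μ := hf.integrable_of_hasCompactSupport (HasCompactSupport.of_compactSpace f)

lemma continuous_re_circle : Continuous (fun w : Circle => (w : ℂ).re) :=
  Complex.continuous_re.comp continuous_subtype_val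

lemma exp_re (t : ℝ) : ((Circle.exp t : Circle) : ℂ).re = Real.cos t := by
  rw [Circle.coe_exp, Complex.exp_ofReal_mul_I_re]

lemma circle_integral_re : ∫ w : Circle, (w : ℂ).re ∂circleHaar = 0 := by
  rw [integral_circleHaar _ continuous_re_circle]
  simp_rw [exp_re]
  simp

lemma integral_re_sq : ∫ w : Circle, (w : ℂ).re ^ 2 ∂circleHaar = 1 / 2 := by
  rw [integral_circleHaar (f := fun w => (w : ℂ).re ^ 2) (continuous_re_circle.pow 2)]
  simp_rw [exp_re]
  rw [integral_cos_sq]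
  have := Real.pi_pos
  simp
  field_simp

lemma integral_abs_re : ∫ w : Circle, |(w : ℂ).re| ∂circleHaar = 2 / Real.pi := by
  rw [integral_circleHaar (fun w => |(w : ℂ).re|) continuous_re_circle.abs]
  simp_rw [exp_re]
  have hpi := Real.pi_pos
  have hper : Function.Periodic (fun t => |Real.cos t|) (2 * Real.pi) := fun t => by simp
  have h1 := hper.intervalIntegral_add_eq 0 (-(Real.pi / 2))
  rw [zero_add] at h1
  have hi : ∀ a b : ℝ, IntervalIntegrable (fun t => |Real.cos t|) volume a b := fun a b =>
    (Real.continuous_cos.abs).intervalIntegrable a b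
  rw [h1, ← intervalIntegral.integral_add_adjacent_intervals (hi _ (Real.pi / 2)) (hi _ _)]
  have h2 : ∫ t in (-(Real.pi / 2))..(Real.pi / 2), |Real.cos t|
      = ∫ t in (-(Real.pi / 2))..(Real.pi / 2), Real.cos t := by
    apply intervalIntegral.integral_congr
    intro t ht
    rw [Set.uIcc_of_le (by linarith)] at ht
    exact abs_of_nonneg (Real.cos_nonneg_of_mem_Icc ht)
  have h3 : ∫ t in (Real.pi / 2)..(-(Real.pi / 2) + 2 * Real.pi), |Real.cos t|
      = ∫ t in (Real.pi / 2)..(-(Real.pi / 2) + 2 * Real.pi), -Real.cos t := by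
    apply intervalIntegral.integral_congr
    intro t ht
    rw [Set.uIcc_of_le (by linarith)] at ht
    exact abs_of_nonpos (Real.cos_nonpos_of_pi_div_two_le_of_le ht.1 (by linarith [ht.2]))
  rw [h2, h3, intervalIntegral.integral_neg, integral_cos, integral_cos, Real.sin_add_two_pi]
  simp only [Real.sin_neg, Real.sin_pi_div_two]
  field_simp
  norm_num

lemma integral_abs_re_mul (s : ℂ) :
    ∫ w : Circle, |((w : ℂ) * s).re| ∂circleHaar = 2 / Real.pi * ‖s‖ := by
  obtain ⟨u, hu⟩ : ∃ u : Circle, s = ‖s‖ * (u : ℂ) := by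
    refine ⟨Circle.exp (Complex.arg s), ?_⟩
    rw [Circle.coe_exp, Complex.norm_mul_exp_arg_mul_I]
  have h : ∀ w : Circle, |((w : ℂ) * s).re| = ‖s‖ * |((u * w : Circle) : ℂ).re| := by
    intro w
    have : (w : ℂ) * s = (‖s‖ : ℂ) * ((u * w : Circle) : ℂ) := by
      conv_lhs => rw [hu]
      push_cast
      ring
    rw [this, Complex.re_ofReal_mul, abs_mul, abs_of_nonneg (norm_nonneg s)]
  simp_rw [h]
  have h2 : ∫ w : Circle, |((u * w : Circle) : ℂ).re| ∂circleHaar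
      = ∫ w : Circle, |(w : ℂ).re| ∂circleHaar := by
    have hm := measurePreserving_mul_circle u
    conv_rhs => rw [← hm.map_eq]
    rw [integral_map hm.aemeasurable continuous_re_circle.abs.aestronglyMeasurable]
  rw [integral_const_mul, h2, integral_abs_re]
  ring

instance (d : ℕ) : IsProbabilityMeasure (torusHaar d) := by
  unfold torusHaar; infer_instance

lemma measurePreserving_mul_torus (d : ℕ) (u : Circle) :
    MeasurePreserving (fun (z : Fin d → Circle) j => u * z j) (torusHaar d) (torusHaar d) := 
  measurePreserving_pi _ _ (fun _ => measurePreserving_mul_circle u)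

lemma continuous_sum (d : ℕ) : Continuous (fun z : Fin d → Circle => ∑ j, (z j : ℂ)) :=
  continuous_finsetSum _ fun j _ => continuous_subtype_val.comp (continuous_apply j)

lemma torus_norm_eq (d : ℕ) :
    ∫ z : Fin d → Circle, ‖∑ j, (z j : ℂ)‖ ∂(torusHaar d)
      = Real.pi / 2 * ∫ z : Fin d → Circle, |(∑ j, (z j : ℂ)).re| ∂(torusHaar d) := by
  have hpi := Real.pi_pos
  have hc : Continuous (fun z : Fin d → Circle => |(∑ j, (z j : ℂ)).re|) :=
    (Complex.continuous_re.comp (continuous_sum d)).abs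
  have h1 : ∀ u : Circle, ∫ z : Fin d → Circle, |((u : ℂ) * ∑ j, (z j : ℂ)).re| ∂(torusHaar d)
      = ∫ z : Fin d → Circle, |(∑ j, (z j : ℂ)).re| ∂(torusHaar d) := by
    intro u
    have hm := measurePreserving_mul_torus d u
    conv_rhs => rw [← hm.map_eq]
    rw [integral_map hm.aemeasurable hc.aestronglyMeasurable]
    simp [Finset.mul_sum]
  have hswap : ∫ u : Circle, ∫ z : Fin d → Circle, |((u : ℂ) * ∑ j, (z j : ℂ)).re| ∂(torusHaar d)
        ∂circleHaar
      = ∫ z : Fin d → Circle, ∫ u : Circle, |((u : ℂ) * ∑ j, (z j : ℂ)).re| ∂circleHaar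
        ∂(torusHaar d) := by
    apply integral_integral_swap
    apply integrable_cont
    exact (Complex.continuous_re.comp ((continuous_subtype_val.comp continuous_fst).mul
      ((continuous_sum d).comp continuous_snd))).abs
  simp_rw [h1, integral_abs_re_mul] at hswap
  rw [integral_const_mul] at hswap
  simp only [integral_const, probReal_univ, one_smul] at hswap
  rw [hswap]
  field_simp

lemma gaussian_abs : ∫ x : ℝ, |x| ∂(gaussianReal 0 1) = Real.sqrt (2 / Real.pi) := by
  rw [integral_gaussianReal_eq_integral_smul one_ne_zero]
  simp only [gaussianPDFReal, smul_eq_mul, NNReal.coe_one, mul_one, sub_zero]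
  have h := integral_comp_abs (f := fun x : ℝ => (√(2 * Real.pi))⁻¹ * Real.exp (-x ^ 2 / 2) * x)
  simp only [sq_abs] at h
  rw [h]
  have h2 := integral_rpow_mul_exp_neg_mul_rpow (p := 2) (q := 1) (b := 1 / 2)
    (by norm_num) (by norm_num) (by norm_num)
  have h3 : ∫ x in Set.Ioi (0 : ℝ), (√(2 * Real.pi))⁻¹ * Real.exp (-x ^ 2 / 2) * x
      = (√(2 * Real.pi))⁻¹ * ∫ x in Set.Ioi (0 : ℝ), x ^ (1 : ℝ) * Real.exp (-(1 / 2) * x ^ (2 : ℝ)) := by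
    rw [← integral_const_mul]
    congr 1
    ext x
    rw [Real.rpow_one, Real.rpow_two]
    rw [show -x ^ 2 / 2 = -(1 / 2) * x ^ 2 by ring]
    ring
  rw [h3, h2]
  have hpi := Real.pi_pos
  norm_num
  have hs : √Real.pi ≠ 0 := by positivity
  have h22 : √2 * √2 = (2 : ℝ) := Real.mul_self_sqrt (by norm_num)
  field_simp
  nlinarith

lemma rpow_bound (p : ℝ) (hp : (1 - Real.log Real.pi / Real.log 4)⁻¹ < p) :
    √Real.pi / 2 < ((2 : ℝ) ^ (1 / p))⁻¹ := by
  have hpi := Real.pi_pos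
  have hl2 : 0 < Real.log 2 := Real.log_pos (by norm_num)
  have hl4 : Real.log 4 = 2 * Real.log 2 := by
    rw [show (4 : ℝ) = 2 ^ 2 by norm_num, Real.log_pow]; norm_num
  have hq : 0 < 1 - Real.log Real.pi / Real.log 4 := by
    rw [sub_pos, div_lt_one (by linarith)]
    exact Real.log_lt_log hpi Real.pi_lt_four
  have hp0 : 0 < p := lt_trans (inv_pos.mpr hq) hp
  have h1 : 1 / p < 1 - Real.log Real.pi / Real.log 4 := by
    rw [one_div]; exact inv_lt_of_inv_lt₀ hq hp
  rw [← Real.rpow_neg (by norm_num)]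
  rw [← Real.log_lt_log_iff (by positivity) (by positivity), Real.log_rpow (by norm_num),
    Real.log_div (by positivity) (by norm_num), Real.log_sqrt hpi.le]
  rw [hl4] at h1
  have h2 : 1 / p * Real.log 2 < (1 - Real.log Real.pi / (2 * Real.log 2)) * Real.log 2 :=
    mul_lt_mul_of_pos_right h1 hl2
  have h3 : (1 - Real.log Real.pi / (2 * Real.log 2)) * Real.log 2
     = Real.log 2 - Real.log Real.pi / 2 := by field_simp
  linarith

/-- Key limit statement: for iid copies on some probability space, truncated expectation bound. -/
lemma eventually_bound (c : ℝ) (hc : Real.sqrt (2 / Real.pi) < c) :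
    ∃ d : ℕ, 0 < d ∧
      ∫ z : Fin d → Circle, |(∑ j, (z j : ℂ)).re| ∂(torusHaar d) < √d / √2 * c := by
  obtain ⟨Ω, mΩ, P, U, hUm, hUl, hUi, hP⟩ := exists_iid ℕ circleHaar
  -- choose truncation level
  obtain ⟨M, hM0, hM⟩ : ∃ M : ℝ, 0 < M ∧ Real.sqrt (2 / Real.pi) + 1 / M < c := by
    refine ⟨2 / (c - Real.sqrt (2 / Real.pi)), by have := sub_pos.mpr hc; positivity, ?_⟩
    rw [one_div_div]; linarith
  let g : Circle → ℝ := fun w => √2 * (w : ℂ).re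
  have hgc : Continuous g := continuous_const.mul continuous_re_circle
  have hgb : ∀ w, ‖g w‖ ≤ √2 := fun w => by
    simp only [g, norm_mul, Real.norm_eq_abs, abs_of_nonneg (Real.sqrt_nonneg 2)]
    have : |(w : ℂ).re| ≤ 1 := (Complex.abs_re_le_norm _).trans (Circle.norm_coe w).le
    nlinarith [Real.sqrt_nonneg 2]
  let X : ℕ → Ω → ℝ := fun k ω => g (U k ω)
  have hXm : ∀ k, Measurable (X k) := fun k => hgc.measurable.comp (hUm k)
  have hXi : iIndepFun X P := hUi.comp (fun _ => g) (fun _ => hgc.measurable)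
  have hXL : ∀ k, MemLp (X k) 2 P := fun k =>
    MemLp.of_bound (hXm k).aestronglyMeasurable (√2) (ae_of_all _ fun ω => hgb _)
  have h0 : ∀ k, P[X k] = 0 := fun k => by
    have := (hUl k).integral_comp (f := g) hgc.aestronglyMeasurable
    change ∫ ω, g (U k ω) ∂P = 0
    rw [Function.comp_def] at this
    rw [this]
    simp only [g]
    rw [integral_const_mul, circle_integral_re, mul_zero]
  have h1 : ∀ k, P[X k ^ 2] = 1 := fun k => by
    have := (hUl k).integral_comp (f := fun w => g w ^ 2) (hgc.pow 2).aestronglyMeasurable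
    change ∫ ω, g (U k ω) ^ 2 ∂P = 1
    rw [Function.comp_def] at this
    rw [this]
    simp only [g, mul_pow]
    rw [integral_const_mul, integral_re_sq, Real.sq_sqrt (by norm_num)]
    norm_num
  have hident : ∀ i, IdentDistrib (X i) (X 0) P P := fun i =>
    IdentDistrib.comp (u := g)
      ⟨(hUl i).aemeasurable, (hUl 0).aemeasurable, by rw [(hUl i).map_eq, (hUl 0).map_eq]⟩
      hgc.measurable
  have hclt := tendstoInDistribution_inv_sqrt_mul_sum (P' := gaussianReal 0 1) (Y := id)
    HasLaw.id (h0 0) (h1 0) hXi hident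
  let Z : ℕ → Ω → ℝ := fun n ω => (√n)⁻¹ * ∑ k ∈ Finset.range n, X k ω
  have hZm : ∀ n, Measurable (Z n) := fun n =>
    (Finset.measurable_sum _ fun k _ => hXm k).const_mul _
  have hSL : ∀ n, MemLp (∑ k ∈ Finset.range n, X k) 2 P := fun n =>
    memLp_finsetSum' _ fun k _ => hXL k
  have hZL : ∀ n, MemLp (Z n) 2 P := fun n => by
    have := (hSL n).const_mul ((√n)⁻¹)
    convert! this using 1
    ext ω
    simp [Z]
  -- bounded test function
  let φ : BoundedContinuousFunction ℝ ℝ := BoundedContinuousFunction.ofNormedAddCommGroup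
    (fun x => min |x| M) (continuous_abs.min continuous_const) M (fun x => by
      rw [Real.norm_eq_abs, abs_of_nonneg (le_min (abs_nonneg _) hM0.le)]
      exact min_le_right _ _)
  have hφ : ∀ x, φ x = min |x| M := fun x => rfl
  have hlim : Tendsto (fun n => ∫ ω, min |Z n ω| M ∂P) atTop
      (𝓝 (∫ x, min |x| M ∂(gaussianReal 0 1))) := by
    have := (ProbabilityMeasure.tendsto_iff_forall_integral_tendsto.1 hclt.tendsto) φ
    simp only [ProbabilityMeasure.coe_mk, Measure.map_id] at this
    refine this.congr fun n => ?_
    rw [integral_map (hZm n).aemeasurable φ.continuous.aestronglyMeasurable]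
    rfl
  have hGi : Integrable (fun x : ℝ => |x|) (gaussianReal 0 1) := by
    have : MemLp id 1 (gaussianReal 0 1) := memLp_id_gaussianReal 1
    exact (memLp_one_iff_integrable.1 this).abs
  have hG : ∫ x, min |x| M ∂(gaussianReal 0 1) ≤ Real.sqrt (2 / Real.pi) := by
    rw [← gaussian_abs]
    exact integral_mono_of_nonneg (ae_of_all _ fun x => le_min (abs_nonneg _) hM0.le) hGi
      (ae_of_all _ fun x => min_le_left _ _)
  have hev := hlim.eventually (gt_mem_nhds (show _ < c - 1 / M by linarith))
  obtain ⟨n, hn, hn0⟩ := (hev.and (eventually_gt_atTop 0)).exists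
  refine ⟨n, hn0, ?_⟩
  have hnr : (0 : ℝ) < n := by exact_mod_cast hn0
  have hsn : 0 < √(n : ℝ) := Real.sqrt_pos.mpr hnr
  -- second moment
  have hS2 : ∫ ω, (∑ k ∈ Finset.range n, X k ω) ^ 2 ∂P = n := by
    have hS0 : P[∑ k ∈ Finset.range n, X k] = 0 := by
      simp only [Finset.sum_apply]
      rw [integral_finsetSum _ fun k _ => (hXL k).integrable one_le_two]
      exact Finset.sum_eq_zero fun k _ => h0 k
    have hv := IndepFun.variance_sum (μ := P) (s := Finset.range n) (X := X) (fun i _ => hXL i)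
      (fun i _ j _ hij => hXi.indepFun hij)
    rw [variance_of_integral_eq_zero (hSL n).aemeasurable hS0] at hv
    simp only [Finset.sum_apply] at hv
    rw [hv, Finset.sum_congr rfl (g := fun _ => (1 : ℝ))]
    · simp
    · intro k _
      rw [variance_of_integral_eq_zero (hXm k).aemeasurable (h0 k)]
      exact h1 k
  have hZ2 : ∫ ω, Z n ω ^ 2 ∂P = 1 := by
    simp only [Z, mul_pow]
    rw [integral_const_mul, hS2, inv_pow, Real.sq_sqrt hnr.le, inv_mul_cancel₀ hnr.ne']
  have hZabs : ∫ ω, |Z n ω| ∂P < c := by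
    have hi1 : Integrable (fun ω => min |Z n ω| M) P :=
      ((hZL n).integrable one_le_two).abs.inf (integrable_const M)
    have hi2 : Integrable (fun ω => Z n ω ^ 2) P := (hZL n).integrable_sq
    have : ∫ ω, |Z n ω| ∂P ≤ ∫ ω, (min |Z n ω| M + Z n ω ^ 2 / M) ∂P := by
      refine integral_mono ((hZL n).integrable one_le_two).abs (hi1.add (hi2.div_const M)) ?_
      intro ω
      change |Z n ω| ≤ min |Z n ω| M + Z n ω ^ 2 / M
      rcases le_total |Z n ω| M with h | h
      · rw [min_eq_left h]
        have : 0 ≤ Z n ω ^ 2 / M := by positivity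
        linarith
      · rw [min_eq_right h, ← sq_abs]
        have : |Z n ω| ≤ |Z n ω| ^ 2 / M := by
          rw [le_div_iff₀ hM0, sq]
          exact mul_le_mul_of_nonneg_left h (abs_nonneg _)
        linarith
    rw [integral_add hi1 (hi2.div_const M), integral_div, hZ2] at this
    linarith
  -- transfer to the torus
  have hmap : P.map (fun ω (j : Fin n) => U j ω) = torusHaar n := by
    have hi : iIndepFun (fun (j : Fin n) => U j) P := hUi.precomp Fin.val_injective
    rw [(iIndepFun_iff_map_fun_eq_pi_map (fun j => (hUm _).aemeasurable)).1 hi]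
    unfold torusHaar
    congr 1
    ext1 j
    exact (hUl j).map_eq
  have htr : ∫ z : Fin n → Circle, |(∑ j, (z j : ℂ)).re| ∂(torusHaar n)
      = √n / √2 * ∫ ω, |Z n ω| ∂P := by
    have hcr : Continuous (fun z : Fin n → Circle => |(∑ j, (z j : ℂ)).re|) :=
      (Complex.continuous_re.comp (continuous_sum n)).abs
    have hUm' : Measurable (fun ω (j : Fin n) => U j ω) :=
      measurable_pi_lambda _ fun j => hUm _
    rw [← hmap, integral_map hUm'.aemeasurable hcr.aestronglyMeasurable,
      ← integral_const_mul]
    congr 1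
    ext ω
    have hs2 : 0 < √(2 : ℝ) := by positivity
    have : Z n ω = (√n)⁻¹ * √2 * (∑ j : Fin n, (U j ω : ℂ)).re := by
      simp only [Z, X, g]
      rw [← Finset.mul_sum, Finset.sum_range (fun k => ((U k ω : Circle) : ℂ).re), Complex.re_sum]
      ring
    rw [this, abs_mul, abs_of_pos (by positivity : 0 < (√(n : ℝ))⁻¹ * √2)]
    field_simp
  rw [htr]
  exact mul_lt_mul_of_pos_left hZabs (by positivity)

/-- Quantitative core of the main theorem: if `p > p₀ = (1 - log π / log 4)⁻¹`, then
there is a dimension `d` with `2^{1/p} ∫_{𝕋^d} |z₁ + ⋯ + z_d|/√d dm < 1`. -/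
theorem exists_dim_main (p : ℝ) (hp : (1 - Real.log Real.pi / Real.log 4)⁻¹ < p) :
    ∃ d : ℕ, 0 < d ∧
      (2 : ℝ) ^ (1 / p) *
        ∫ z : Fin d → Circle, ‖∑ j, (z j : ℂ)‖ / Real.sqrt d ∂(torusHaar d) < 1 := by
  have hb := rpow_bound p hp
  have hpi := Real.pi_pos
  have hA : (0 : ℝ) < (2 : ℝ) ^ (1 / p) := by positivity
  set A := (2 : ℝ) ^ (1 / p) with hAdef
  have hs2 : 0 < √(2 : ℝ) := by positivity
  have h22 : √2 * √2 = (2 : ℝ) := Real.mul_self_sqrt (by norm_num)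
  have hpp : √Real.pi * √Real.pi = Real.pi := Real.mul_self_sqrt hpi.le
  have hsp : 0 < √Real.pi := by positivity
  obtain ⟨d, hd, h⟩ := eventually_bound (A⁻¹ * (2 * √2 / Real.pi)) (by
    have e : Real.sqrt (2 / Real.pi) = √Real.pi / 2 * (2 * √2 / Real.pi) := by
      rw [Real.sqrt_div (by norm_num)]
      field_simp
      nlinarith
    rw [e]
    exact mul_lt_mul_of_pos_right hb (by positivity))
  refine ⟨d, hd, ?_⟩
  have hsd : 0 < √(d : ℝ) := Real.sqrt_pos.mpr (by exact_mod_cast hd)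
  rw [integral_div, torus_norm_eq]
  calc A * (Real.pi / 2 * (∫ z : Fin d → Circle, |(∑ j, (z j : ℂ)).re| ∂(torusHaar d)) / √d)
      < A * (Real.pi / 2 * (√d / √2 * (A⁻¹ * (2 * √2 / Real.pi))) / √d) := by gcongr
    _ = 1 := by field_simp
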